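/- Let q be a prime power and D an [n,k] cyclic code over F_q with gcd(n,q) = 1. Let α be a primitive n-th root of unity in the splitting field of x^n − 1 over F_q, let s be a positive integer dividing n, and let m = ord_s(q) be the multiplicative order of q modulo s. If the complete defining set Z(D) contains the coset α·G_s = {α^{1+js} : 0 ≤ j < n/s}, then the locality r of D satisfies r < s·(1 − (q^{m−1}−1)/(q^m−1)). -/

import Mathlib

open scoped BigOperators

namespace LRC

/-- Hamming weight of a vector. -/
noncomputable def hwt {n : ℕ} {F : Type*} [Zero F] (c : Fin n → F) : ℕ :=
  Nat.card {i : Fin n // c i ≠ 0}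

/-- A linear code is cyclic if it is closed under the cyclic shift of coordinates. -/
def IsCyclicCode {n : ℕ} [NeZero n] {F : Type*} [Field F] (C : Submodule F (Fin n → F)) : Prop :=
  ∀ c ∈ C, (fun i : Fin n => c (i - 1)) ∈ C

/-- `A` is a recovery set for coordinate `i` of the code `C`. -/
def IsRecoverySet {n : ℕ} {F : Type*} [Field F] (C : Submodule F (Fin n → F)) (i : Fin n)
    (A : Finset (Fin n)) : Prop :=
  i ∉ A ∧ ∃ φ : ((j : A) → F) → F, ∀ c ∈ C, c i = φ (fun j => c j)

/-- The code `C` has locality `r`. -/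
def HasLocality {n : ℕ} {F : Type*} [Field F] (C : Submodule F (Fin n → F)) (r : ℕ) : Prop :=
  ∀ i : Fin n, ∃ A : Finset (Fin n), A.card ≤ r ∧ IsRecoverySet C i A

/-- Complete defining set of zeros of a cyclic code (locator field = symbol field). -/
def definingSet {n : ℕ} {F : Type*} [Field F] (C : Submodule F (Fin n → F)) : Set F :=
  {β | β ^ n = 1 ∧ ∀ c ∈ C, ∑ j : Fin n, c j * β ^ (j : ℕ) = 0}

/-- Complete defining set of zeros of a cyclic code in an extension (locator) field `K`. -/
def definingSetExt (n : ℕ) {F K : Type*} [Field F] [Field K] [Algebra F K]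
    (C : Submodule F (Fin n → F)) : Set K :=
  {β | β ^ n = 1 ∧ ∀ c ∈ C, ∑ j : Fin n, algebraMap F K (c j) * β ^ (j : ℕ) = 0}

/-- The cyclic code with a given set of zeros. -/
def codeOfZeros (n : ℕ) {F : Type*} [Field F] (Z : Set F) : Submodule F (Fin n → F) where
  carrier := {c | ∀ β ∈ Z, ∑ j : Fin n, c j * β ^ (j : ℕ) = 0}
  add_mem' := by
    intro a b ha hb β hβ
    have h1 := ha β hβ
    have h2 := hb β hβ
    calc ∑ j : Fin n, (a + b) j * β ^ (j : ℕ)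
        = (∑ j : Fin n, a j * β ^ (j : ℕ)) + ∑ j : Fin n, b j * β ^ (j : ℕ) := by
          rw [← Finset.sum_add_distrib]
          exact Finset.sum_congr rfl (by intro j _; simp [add_mul])
      _ = 0 := by rw [h1, h2, add_zero]
  zero_mem' := by intro β hβ; simp
  smul_mem' := by
    intro t a ha β hβ
    have h1 := ha β hβ
    calc ∑ j : Fin n, (t • a) j * β ^ (j : ℕ)
        = t * ∑ j : Fin n, a j * β ^ (j : ℕ) := by
          rw [Finset.mul_sum]
          exact Finset.sum_congr rfl (by intro j _; simp [mul_assoc])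
      _ = 0 := by rw [h1, mul_zero]

/-- Minimum distance: least Hamming weight of a nonzero codeword. -/
noncomputable def minDist {n : ℕ} {F : Type*} [Field F] (C : Submodule F (Fin n → F)) : ℕ :=
  sInf {w | ∃ c ∈ C, c ≠ 0 ∧ hwt c = w}

/-- The dual code under the standard bilinear form. -/
def dualCode {n : ℕ} {F : Type*} [Field F] (C : Submodule F (Fin n → F)) :
    Submodule F (Fin n → F) where
  carrier := {y | ∀ c ∈ C, ∑ i : Fin n, c i * y i = 0}
  add_mem' := by
    intro a b ha hb c hc
    have h1 := ha c hc
    have h2 := hb c hc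
    calc ∑ i : Fin n, c i * (a + b) i
        = (∑ i : Fin n, c i * a i) + ∑ i : Fin n, c i * b i := by
          rw [← Finset.sum_add_distrib]
          exact Finset.sum_congr rfl (by intro j _; simp [mul_add])
      _ = 0 := by rw [h1, h2, add_zero]
  zero_mem' := by intro c hc; simp
  smul_mem' := by
    intro t a ha c hc
    have h1 := ha c hc
    calc ∑ i : Fin n, c i * (t • a) i
        = t * ∑ i : Fin n, c i * a i := by
          rw [Finset.mul_sum]
          exact Finset.sum_congr rfl (by intro j _; simp [mul_assoc]; ring)
      _ = 0 := by rw [h1, mul_zero]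

/-!
Let `n = s * ν`. A codeword `c` is interleaved from its restrictions to the residue classes modulo
`ν`. Writing `A_ρ` for the sum of the terms `c_j α ^ j` with `j ≡ ρ [MOD ν]`, the zeros
`α ^ (1 + k * s)` say that the polynomial `∑ A_ρ X ^ ρ` of degree `< ν` vanishes at the `ν` distinct
points `α ^ (k * s)`; hence every `A_ρ` is zero, that is, each restriction has `γ = α ^ ν` as a
zero.

The words `(f (γ ^ t))_t`, for `f` an `F`-linear form on `F(γ)`, form a cyclic code of dimension
`d = [F(γ) : F]` and are orthogonal to each such restriction. Averaging weights over this code gives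
a nonzero word of weight at most `s (q ^ d - q ^ (d - 1)) / (q ^ d - 1)`, and its cyclic shifts give
a parity check at every coordinate. Finally `s ∣ q ^ d - 1`, so `m ≤ d`, and the bound decreases
with `d`.
-/

section Averaging

variable {F : Type*} [Field F] [Fintype F] [DecidableEq F]

lemma card_filter_linearMap_ne_zero {V : Type*} [AddCommGroup V] [Module F V] [Fintype V]
    {f : V →ₗ[F] F} (hf : f ≠ 0) :
    (Finset.univ.filter fun v => f v ≠ 0).card =
      Fintype.card F ^ Module.finrank F V - Fintype.card F ^ (Module.finrank F V - 1) := by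
  have := Fintype.ofFinite (LinearMap.ker f)
  have hker : (Finset.univ.filter fun v => f v = 0).card =
      Fintype.card F ^ (Module.finrank F V - 1) := by
    rw [← Fintype.card_of_subtype (p := (· ∈ LinearMap.ker f)) _ fun v => by simp,
      Module.card_eq_pow_finrank (K := F), ← Module.Dual.finrank_ker_add_one_of_ne_zero hf,
      Nat.add_sub_cancel]
  have hsplit := Finset.card_filter_add_card_filter_not (s := Finset.univ) fun v => f v = 0
  rw [hker, Finset.card_univ, Module.card_eq_pow_finrank (K := F) (V := V)] at hsplit
  exact Nat.eq_sub_of_add_eq' hsplit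

lemma sum_hammingNorm_le {V ι : Type*} [AddCommGroup V] [Module F V] [Fintype V] [Fintype ι]
    (φ : V →ₗ[F] ι → F) :
    ∑ v, hammingNorm (φ v) ≤ Fintype.card ι *
      (Fintype.card F ^ Module.finrank F V - Fintype.card F ^ (Module.finrank F V - 1)) := by
  simp only [hammingNorm, Finset.card_filter]
  rw [Finset.sum_comm, ← smul_eq_mul]
  refine Finset.sum_le_card_nsmul _ _ _ fun i _ => ?_
  rw [← Finset.card_filter]
  by_cases h : LinearMap.proj i ∘ₗ φ = 0
  · simp [show ∀ v, φ v i = 0 from LinearMap.congr_fun h]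
  · exact (card_filter_linearMap_ne_zero h).le

-- The averaging argument behind the Plotkin bound.
lemma exists_mem_hammingNorm_mul_le {ι : Type*} [Fintype ι] {W : Submodule F (ι → F)}
    (hW : W ≠ ⊥) :
    ∃ w ∈ W, w ≠ 0 ∧ hammingNorm w * (Fintype.card F ^ Module.finrank F W - 1) ≤
      Fintype.card ι *
        (Fintype.card F ^ Module.finrank F W - Fintype.card F ^ (Module.finrank F W - 1)) := by
  classical
  have := Fintype.ofFinite W
  obtain ⟨w₀, hw₀, hw₀0⟩ := W.exists_mem_ne_zero_of_ne_bot hW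
  obtain ⟨w, hw, hmin⟩ := Finset.exists_min_image (Finset.univ.erase (0 : W))
    (fun w => hammingNorm (w : ι → F)) ⟨⟨w₀, hw₀⟩, by simpa using hw₀0⟩
  refine ⟨w, w.2, by simpa using hw, ?_⟩
  have hcard : (Finset.univ.erase (0 : W)).card = Fintype.card F ^ Module.finrank F W - 1 := by
    rw [Finset.card_erase_of_mem (Finset.mem_univ _), Finset.card_univ,
      Module.card_eq_pow_finrank (K := F)]
  calc hammingNorm (w : ι → F) * (Fintype.card F ^ Module.finrank F W - 1)
      ≤ ∑ v ∈ Finset.univ.erase (0 : W), hammingNorm (v : ι → F) := by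
        rw [mul_comm, ← hcard, ← smul_eq_mul]
        exact Finset.card_nsmul_le_sum _ _ _ hmin
    _ ≤ ∑ v : W, hammingNorm (v : ι → F) :=
        Finset.sum_le_sum_of_subset (Finset.subset_univ _)
    _ ≤ _ := sum_hammingNorm_le W.subtype

end Averaging

section Locality

variable {F : Type*} [Field F] {n : ℕ}

namespace IsCyclicCode

variable [NeZero n] {W : Submodule F (Fin n → F)}

open Fin.CommRing in
lemma shift_mem (hW : IsCyclicCode W) {w : Fin n → F} (hw : w ∈ W) (k : Fin n) :
    (fun i => w (i - k)) ∈ W := by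
  have hiter (l : ℕ) : (fun i => w (i - (l : Fin n))) ∈ W := by
    induction l with
    | zero => simpa using hw
    | succ l ih =>
      convert hW _ ih using 2 with i
      congr 1
      push_cast
      ring
  simpa using hiter k

lemma exists_mem_apply_ne_zero_hammingNorm_eq [DecidableEq F] (hW : IsCyclicCode W)
    {w : Fin n → F} (hw : w ∈ W) (hw0 : w ≠ 0) (i : Fin n) :
    ∃ w' ∈ W, w' i ≠ 0 ∧ hammingNorm w' = hammingNorm w := by
  obtain ⟨t, ht⟩ := Function.ne_iff.1 hw0
  refine ⟨_, hW.shift_mem hw (i - t), by simpa using ht, ?_⟩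
  exact Finset.card_equiv (Equiv.subRight (i - t)) (by simp)

end IsCyclicCode

lemma isRecoverySet_of_forall_eq_zero {C : Submodule F (Fin n → F)} {i : Fin n}
    {A : Finset (Fin n)} (hi : i ∉ A) (h : ∀ c ∈ C, (∀ j ∈ A, c j = 0) → c i = 0) :
    IsRecoverySet C i A := by
  have hfactors : Function.FactorsThrough (fun c : C => (c : Fin n → F) i)
      (fun (c : C) (j : A) => (c : Fin n → F) j) := fun c c' hcc' =>
    sub_eq_zero.1 <| h _ (C.sub_mem c.2 c'.2) fun j hj =>
      sub_eq_zero.2 (congrFun hcc' ⟨j, hj⟩)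
  obtain ⟨φ, hφ⟩ := (Function.factorsThrough_iff _).1 hfactors
  exact ⟨hi, φ, fun c hc => congrFun hφ ⟨c, hc⟩⟩

lemma isRecoverySet_of_mem_dualCode [DecidableEq F] {C : Submodule F (Fin n → F)}
    {w : Fin n → F} (hw : w ∈ dualCode C) {i : Fin n} (hi : w i ≠ 0) :
    IsRecoverySet C i ((Finset.univ.filter fun j => w j ≠ 0).erase i) := by
  refine isRecoverySet_of_forall_eq_zero (Finset.notMem_erase _ _) fun c hc hzero => ?_
  have hsingle : ∑ j, c j * w j = c i * w i := by
    refine Finset.sum_eq_single_of_mem i (Finset.mem_univ i) fun j _ hji => ?_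
    by_cases hj : w j = 0
    · rw [hj, mul_zero]
    · rw [hzero j (by simp [hji, hj]), zero_mul]
  exact (mul_eq_zero.1 (hsingle.symm.trans (hw c hc))).resolve_right hi

lemma hasLocality_of_le_dualCode [NeZero n] [DecidableEq F] {C W : Submodule F (Fin n → F)}
    (hW : IsCyclicCode W) (hWC : W ≤ dualCode C) {w : Fin n → F} (hw : w ∈ W) (hw0 : w ≠ 0) :
    HasLocality C (hammingNorm w - 1) := by
  intro i
  obtain ⟨u, hu, hui, hnorm⟩ := hW.exists_mem_apply_ne_zero_hammingNorm_eq hw hw0 i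
  refine ⟨_, ?_, isRecoverySet_of_mem_dualCode (hWC hu) hui⟩
  rw [Finset.card_erase_of_mem (by simpa using hui), ← hnorm, hammingNorm]

lemma IsRecoverySet.of_map_funLeft {s : ℕ} {C : Submodule F (Fin n → F)} (e : Fin s ↪ Fin n)
    {t : Fin s} {A : Finset (Fin s)}
    (h : IsRecoverySet (C.map (LinearMap.funLeft F F e)) t A) :
    IsRecoverySet C (e t) (A.map e) := by
  obtain ⟨ht, φ, hφ⟩ := h
  exact ⟨by simpa using ht, fun v => φ fun j => v ⟨e j, Finset.mem_map_of_mem e j.2⟩,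
    fun c hc => hφ _ (Submodule.mem_map_of_mem hc)⟩

lemma hasLocality_of_map_funLeft {s r : ℕ} {C : Submodule F (Fin n → F)}
    (h : ∀ i, ∃ e : Fin s ↪ Fin n, i ∈ Set.range e ∧
      HasLocality (C.map (LinearMap.funLeft F F e)) r) :
    HasLocality C r := by
  intro i
  obtain ⟨e, ⟨t, rfl⟩, he⟩ := h i
  obtain ⟨A, hA, hrec⟩ := he t
  exact ⟨A.map e, (A.card_map e).trans_le hA, hrec.of_map_funLeft⟩

end Locality

section EvalPowers

variable {F : Type*} [Field F]

section Semiring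

variable {A : Type*} [Semiring A] [Algebra F A]

/-- The word `(f (γ ^ t))_{t < s}` attached to a linear form `f` on `A`. When `γ` is an `s`-th root
of unity, the range of this map is the cyclic code of length `s` whose dual consists of the words
having `γ` as a zero. -/
def evalPowers (s : ℕ) (γ : A) : Module.Dual F A →ₗ[F] Fin s → F :=
  LinearMap.pi fun t => Module.Dual.eval F A (γ ^ (t : ℕ))

lemma evalPowers_apply {s : ℕ} (γ : A) (f : Module.Dual F A) (t : Fin s) :
    evalPowers s γ f t = f (γ ^ (t : ℕ)) := rfl

lemma isCyclicCode_range_evalPowers {s : ℕ} [NeZero s] {γ : A} (hγ : γ ^ s = 1) :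
    IsCyclicCode (LinearMap.range (evalPowers (F := F) s γ)) := by
  rintro _ ⟨f, rfl⟩
  refine ⟨f ∘ₗ LinearMap.mulLeft F (γ ^ (s - (1 : Fin s) : ℕ)), funext fun t => ?_⟩
  simp only [evalPowers_apply, LinearMap.comp_apply, LinearMap.mulLeft_apply, ← pow_add]
  rw [Fin.val_sub, ← pow_eq_pow_mod _ hγ]

lemma evalPowers_injective {s : ℕ} [NeZero s] {γ : A} (hγ : γ ^ s = 1)
    (hgen : Algebra.adjoin F {γ} = ⊤) : Function.Injective (evalPowers (F := F) s γ) := by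
  intro f g hfg
  have hspan : Submodule.span F (Submonoid.powers γ : Set A) = ⊤ := by
    rw [Submonoid.powers_eq_closure, ← Algebra.adjoin_eq_span, hgen, Algebra.top_toSubmodule]
  refine LinearMap.ext_on hspan ?_
  rintro _ ⟨k, rfl⟩
  have := congrFun hfg ⟨k % s, Nat.mod_lt _ (NeZero.pos s)⟩
  simpa only [evalPowers_apply, ← pow_eq_pow_mod _ hγ] using this

lemma range_evalPowers_le_dualCode {s : ℕ} {γ : A} {C : Submodule F (Fin s → F)}
    (hγ : ∀ c ∈ C, ∑ t, algebraMap F A (c t) * γ ^ (t : ℕ) = 0) :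
    LinearMap.range (evalPowers (F := F) s γ) ≤ dualCode C := by
  rintro _ ⟨f, rfl⟩ c hc
  simpa only [evalPowers_apply, map_sum, ← Algebra.smul_def, map_smul, smul_eq_mul, map_zero] using
    congrArg f (hγ c hc)

end Semiring

variable [Fintype F] {K : Type*} [Field K] [Algebra F K]

open IntermediateField

lemma exists_forall_hasLocality_of_mem_definingSetExt {s : ℕ} [NeZero s] {γ : K}
    (hγ : γ ^ s = 1) :
    ∃ r : ℕ,
      (r + 1) * (Fintype.card F ^ Module.finrank F F⟮γ⟯ - 1) ≤
        s * (Fintype.card F ^ Module.finrank F F⟮γ⟯ -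
          Fintype.card F ^ (Module.finrank F F⟮γ⟯ - 1)) ∧
      ∀ C : Submodule F (Fin s → F), γ ∈ definingSetExt s C → HasLocality C r := by
  classical
  have hint : IsIntegral F γ := IsIntegral.of_pow (NeZero.pos s) (hγ ▸ isIntegral_one)
  have := adjoin.finiteDimensional hint
  let γ' : F⟮γ⟯ := AdjoinSimple.gen F γ
  have hγ' : γ' ^ s = 1 := Subtype.ext hγ
  have hgen : Algebra.adjoin F {γ'} = ⊤ := (adjoin.powerBasis hint).adjoin_gen_eq_top
  let W := LinearMap.range (evalPowers (F := F) s γ')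
  have hdim : Module.finrank F W = Module.finrank F F⟮γ⟯ := by
    rw [LinearMap.finrank_range_of_inj (evalPowers_injective hγ' hgen), Subspace.dual_finrank_eq]
  have hWbot : W ≠ ⊥ := fun h =>
    Module.finrank_pos.ne' (hdim.symm.trans (Submodule.finrank_eq_zero.2 h))
  obtain ⟨w, hw, hw0, hle⟩ := exists_mem_hammingNorm_mul_le hWbot
  refine ⟨hammingNorm w - 1, ?_, fun C hC => ?_⟩
  · rw [Fintype.card_fin] at hle
    rwa [Nat.sub_add_cancel (hammingNorm_pos_iff.2 hw0), ← hdim]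
  · refine hasLocality_of_le_dualCode (isCyclicCode_range_evalPowers hγ')
      (range_evalPowers_le_dualCode fun c hc => (algebraMap F⟮γ⟯ K).injective ?_) hw hw0
    simpa [γ', ← IsScalarTower.algebraMap_apply] using hC.2 c hc

lemma dvd_card_pow_finrank_adjoin_sub_one {s : ℕ} [NeZero s] {γ : K}
    (hγ : IsPrimitiveRoot γ s) :
    s ∣ Fintype.card F ^ Module.finrank F F⟮γ⟯ - 1 := by
  have hint : IsIntegral F γ := (hγ.isIntegral (NeZero.pos s)).tower_top
  have := adjoin.finiteDimensional hint
  have : Finite F⟮γ⟯ := Module.finite_of_finite F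
  have := Fintype.ofFinite F⟮γ⟯
  have hγ' : IsPrimitiveRoot (AdjoinSimple.gen F γ) s :=
    IsPrimitiveRoot.coe_submonoidClass_iff.1 hγ
  rw [← Module.card_eq_pow_finrank]
  exact hγ'.dvd_of_pow_eq_one _
    (FiniteField.pow_card_sub_one_eq_one _ (hγ'.ne_zero (NeZero.ne s)))

end EvalPowers

section ResidueClass

variable {s ν : ℕ}

/-- The coordinates congruent to `ρ` modulo `ν`, in increasing order: `t ↦ ρ + ν * t`. It is used to
cut a code of length `s * ν` into `ν` codes of length `s`. -/
def residueClassEmb (ρ : Fin ν) : Fin s ↪ Fin (s * ν) where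
  toFun t := finProdFinEquiv (t, ρ)
  inj' _ _ h := (Prod.ext_iff.1 (finProdFinEquiv.injective h)).1

lemma residueClassEmb_val (ρ : Fin ν) (t : Fin s) :
    (residueClassEmb ρ t : ℕ) = ρ + ν * t := rfl

lemma exists_mem_range_residueClassEmb (i : Fin (s * ν)) :
    ∃ ρ : Fin ν, i ∈ Set.range (residueClassEmb (s := s) ρ) :=
  ⟨(finProdFinEquiv.symm i).2, (finProdFinEquiv.symm i).1, finProdFinEquiv.apply_symm_apply i⟩

lemma sum_eq_sum_residueClassEmb {M : Type*} [AddCommMonoid M] (f : Fin (s * ν) → M) :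
    ∑ i, f i = ∑ ρ : Fin ν, ∑ t : Fin s, f (residueClassEmb ρ t) := by
  rw [← finProdFinEquiv.sum_comp, Fintype.sum_prod_type_right]
  rfl

lemma sum_residueClassEmb_eq_zero {R : Type*} [CommRing R] [IsDomain R] {α : R}
    [NeZero (s * ν)] (hα : IsPrimitiveRoot α (s * ν)) {c : Fin (s * ν) → R}
    (hc : ∀ k < ν, ∑ i, c i * (α ^ (1 + k * s)) ^ (i : ℕ) = 0) (ρ : Fin ν) :
    ∑ t : Fin s, c (residueClassEmb ρ t) * (α ^ ν) ^ (t : ℕ) = 0 := by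
  let A (ρ : Fin ν) : R := ∑ t : Fin s, c (residueClassEmb ρ t) * (α ^ ν) ^ (t : ℕ)
  have hpoly (k : Fin ν) :
      ∑ ρ : Fin ν, ((α ^ s) ^ (k : ℕ)) ^ (ρ : ℕ) * (α ^ (ρ : ℕ) * A ρ) = 0 := by
    rw [← hc k k.2, sum_eq_sum_residueClassEmb]
    refine Finset.sum_congr rfl fun ρ _ => ?_
    simp only [A, Finset.mul_sum]
    refine Finset.sum_congr rfl fun t _ => ?_
    have hone : α ^ (s * ν * (k * t)) = 1 := by rw [pow_mul, hα.pow_eq_one, one_pow]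
    rw [residueClassEmb_val]
    linear_combination (-(α ^ ((1 + k * s) * ρ + ν * t)) * c (residueClassEmb ρ t)) * hone
  have hinj : Function.Injective fun k : Fin ν => (α ^ s) ^ (k : ℕ) := fun k l hkl =>
    Fin.ext ((hα.pow (NeZero.pos _) rfl).pow_inj k.2 l.2 hkl)
  have hzero := congrFun (Matrix.eq_zero_of_forall_index_sum_pow_mul_eq_zero hinj hpoly) ρ
  exact (mul_eq_zero.1 hzero).resolve_left (pow_ne_zero _ (hα.ne_zero (NeZero.ne _)))

lemma pow_mem_definingSetExt_map_residueClassEmb {F K : Type*} [Field F] [Field K] [Algebra F K]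
    [NeZero (s * ν)] {α : K} (hα : IsPrimitiveRoot α (s * ν))
    {D : Submodule F (Fin (s * ν) → F)}
    (hD : ∀ k < ν, α ^ (1 + k * s) ∈ definingSetExt (s * ν) D) (ρ : Fin ν) :
    α ^ ν ∈ definingSetExt s (D.map (LinearMap.funLeft F F (residueClassEmb ρ))) := by
  refine ⟨by rw [← pow_mul, mul_comm, hα.pow_eq_one], ?_⟩
  rintro _ ⟨c, hc, rfl⟩
  exact sum_residueClassEmb_eq_zero (c := fun i => algebraMap F K (c i)) hα
    (fun k hk => (hD k hk).2 c hc) ρ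

end ResidueClass

section Bound

variable {k : Type*} [Field k] [LinearOrder k] [IsStrictOrderedRing k]

-- At exponent `0` the quotient is the junk value `0 / 0 = 0`, which does not break monotonicity.
lemma monotone_pow_pred_sub_one_div_pow_sub_one {q : k} (hq : 1 < q) :
    Monotone fun m : ℕ => (q ^ (m - 1) - 1) / (q ^ m - 1) := by
  have hpos (e : ℕ) : 0 < q ^ (e + 1) - 1 := sub_pos.2 (one_lt_pow₀ hq e.succ_ne_zero)
  refine monotone_nat_of_le_succ fun e => ?_
  cases e with
  | zero => simp
  | succ e =>
    rw [div_le_div_iff₀ (hpos e) (hpos (e + 1))]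
    simp only [Nat.add_sub_cancel]
    have hsq : 0 ≤ q ^ e * (q - 1) ^ 2 := by positivity
    linear_combination hsq

lemma cast_le_mul_one_sub_div {q d s w : ℕ} (hq : 1 < q) (hd : d ≠ 0)
    (h : w * (q ^ d - 1) ≤ s * (q ^ d - q ^ (d - 1))) :
    (w : k) ≤ s * (1 - ((q : k) ^ (d - 1) - 1) / ((q : k) ^ d - 1)) := by
  have hpos : (0 : k) < (q : k) ^ d - 1 := sub_pos.2 (one_lt_pow₀ (mod_cast hq) hd)
  have hcast : (w : k) * ((q : k) ^ d - 1) ≤ s * ((q : k) ^ d - (q : k) ^ (d - 1)) := by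
    have := Nat.cast_le (α := k).2 h
    rwa [Nat.cast_mul, Nat.cast_mul, Nat.cast_sub (Nat.one_le_pow _ _ hq.pos),
      Nat.cast_sub (Nat.pow_le_pow_right hq.pos (Nat.sub_le _ _)), Nat.cast_pow, Nat.cast_pow,
      Nat.cast_one] at this
  rw [one_sub_div hpos.ne', mul_div_assoc', le_div_iff₀ hpos]
  linear_combination hcast

end Bound

theorem stmt7_general {F K : Type*} [Field F] [Fintype F] [Field K] [Algebra F K]
    {n s m : ℕ} [NeZero n] {α : K} (hα : IsPrimitiveRoot α n) (hsn : s ∣ n)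
    (hm : ∀ k : ℕ, 0 < k → s ∣ Fintype.card F ^ k - 1 → m ≤ k)
    (D : Submodule F (Fin n → F))
    (hcoset : {β | ∃ j : ℕ, j < n / s ∧ β = α ^ (1 + j * s)} ⊆ definingSetExt n D) :
    ∃ r : ℕ, HasLocality D r ∧
      (r : ℝ) < s * (1 - ((Fintype.card F : ℝ) ^ (m - 1) - 1) /
        ((Fintype.card F : ℝ) ^ m - 1)) := by
  obtain ⟨ν, rfl⟩ := hsn
  have : NeZero s := ⟨left_ne_zero_of_mul (NeZero.ne (s * ν))⟩
  rw [Nat.mul_div_cancel_left ν (NeZero.pos s)] at hcoset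
  have hγ : IsPrimitiveRoot (α ^ ν) s := hα.pow (NeZero.pos _) (mul_comm s ν)
  have hγF := (hγ.isIntegral (NeZero.pos s)).tower_top (A := F)
  have := IntermediateField.adjoin.finiteDimensional hγF
  let d := Module.finrank F (IntermediateField.adjoin F {α ^ ν})
  have hd : 0 < d := Module.finrank_pos
  have hmd := hm d hd (dvd_card_pow_finrank_adjoin_sub_one hγ)
  obtain ⟨r, hr, hloc⟩ := exists_forall_hasLocality_of_mem_definingSetExt (F := F) hγ.pow_eq_one
  refine ⟨r, hasLocality_of_map_funLeft (s := s) fun i => ?_, ?_⟩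
  · obtain ⟨ρ, hρ⟩ := exists_mem_range_residueClassEmb i
    exact ⟨residueClassEmb ρ, hρ, hloc _ <| pow_mem_definingSetExt_map_residueClassEmb hα
      (fun k hk => hcoset ⟨k, hk, rfl⟩) ρ⟩
  · have hF : 1 < Fintype.card F := Fintype.one_lt_card
    calc (r : ℝ) < (r + 1 : ℕ) := mod_cast r.lt_succ_self
      _ ≤ s * (1 - ((Fintype.card F : ℝ) ^ (d - 1) - 1) / ((Fintype.card F : ℝ) ^ d - 1)) :=
        cast_le_mul_one_sub_div hF hd.ne' hr
      _ ≤ _ := by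
        gcongr s * (1 - ?_)
        exact monotone_pow_pred_sub_one_div_pow_sub_one (mod_cast hF) hmd

/-- if the complete defining set of a cyclic code over `F_q` contains the coset
`α·G_s`, then its locality `r` satisfies `r < s(1 − (q^{m−1}−1)/(q^m−1))`. -/
theorem stmt7 {F K : Type*} [Field F] [Fintype F] [Field K] [Fintype K] [Algebra F K]
    (q n k s m : ℕ) [NeZero n] (hq : Fintype.card F = q) (hnq : Nat.Coprime n q)
    (α : K) (hα : IsPrimitiveRoot α n)
    (hs : 0 < s) (hsn : s ∣ n)
    -- `m = ord_s(q)`: the multiplicative order of `q` modulo `s`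
    (hm1 : s ∣ q ^ m - 1) (hm2 : ∀ k' : ℕ, 0 < k' → s ∣ q ^ k' - 1 → m ≤ k')
    (D : Submodule F (Fin n → F)) (hcyc : IsCyclicCode D) (hk : Module.finrank F D = k)
    (hcoset : {β | ∃ j : ℕ, j < n / s ∧ β = α ^ (1 + j * s)} ⊆ definingSetExt n D) :
    ∃ r : ℕ, HasLocality D r ∧
      (r : ℝ) < (s : ℝ) * (1 - ((q : ℝ) ^ (m - 1) - 1) / ((q : ℝ) ^ m - 1)) := by
  subst hq
  exact stmt7_general hα hsn hm2 D hcoset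

end LRC
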